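/- Let u be the normalized Airy function and let 0 < δ'₁ < δ'₂ < ... be the increasing enumeration of the zeros of h ↦ u'(-h) on (0,∞). Define w(x) := (-u'(0)/2)·∑_{k=1}^∞ (δ'ₖ)^{-2}·e^{-δ'ₖ·x} for x > 0. Then for every λ > 0: ∫₀^∞ e^{-λx}·w(x) dx = (u'(λ) - u'(0)·u(λ))/(λ·u'(λ)). -/

import Mathlib

open Real MeasureTheory Set Filter Topology

noncomputable section

/-
The translates `Ψ x : h ↦ u (h + x)` lie in `L²(0, ∞)`, and since `u'' h = 2 * h * u h` the
Wronskian gives `2 (x - y) ⟪Ψ x, Ψ y⟫ = u x * u' y - u' x * u y`. Hence the `Ψ (-δ k)`, the Neumann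
eigenfunctions of the Airy operator on the half-line, are orthogonal, and Parseval's identity for
`⟪Ψ x, Ψ y⟫` is the partial fraction expansion
`∑ k, 1 / (2 δ k (x + δ k) (y + δ k)) = (u x / u' x - u y / u' y) / (x - y)`.
Taking `y = 0` and integrating the series of `w` termwise yields the Laplace transform.

Completeness is the variational principle in Picone's form. The eigenfunction `Ψ (-δ N)` has at
most `N` nodes, so for suitable `c k` the function `Ψ y + ∑ k < N, c k • Ψ (-δ k)` vanishes at
all of them; comparing it with `Ψ (-δ N)` bounds `(y + δ N)` times the squared distance from `Ψ y`
to the span of the first `N` eigenfunctions by a constant independent of `N`, and `δ N → ∞`.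
-/

theorem integral_exp_mul_tsum_exp {ι : Type*} [Countable ι] {l : ℝ} {a r : ι → ℝ}
    (hr : ∀ k, 0 < l + r k) (hs : Summable fun k => a k / (l + r k)) :
    ∫ x in Ioi (0 : ℝ), exp (-l * x) * ∑' k, a k * exp (-(r k) * x) =
      ∑' k, a k / (l + r k) := by
  have integral_term (k : ι) (b : ℝ) :
      ∫ x in Ioi (0 : ℝ), b * exp (-(l + r k) * x) = b / (l + r k) := by
    rw [integral_const_mul, integral_exp_mul_Ioi (by linarith [hr k]), mul_zero, exp_zero,
      neg_div_neg_eq, mul_one_div]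
  have integrable_term (k : ι) :
      IntegrableOn (fun x => a k * exp (-(l + r k) * x)) (Ioi 0) :=
    (integrableOn_exp_mul_Ioi (by linarith [hr k]) 0).const_mul _
  have summable_norm :
      Summable fun k => ∫ x in Ioi (0 : ℝ), ‖a k * exp (-(l + r k) * x)‖ := by
    refine hs.norm.congr fun k => ?_
    simp only [norm_mul, norm_div, norm_of_nonneg (exp_pos _).le, norm_of_nonneg (hr k).le,
      integral_term]
  calc ∫ x in Ioi (0 : ℝ), exp (-l * x) * ∑' k, a k * exp (-(r k) * x)
      = ∫ x in Ioi (0 : ℝ), ∑' k, a k * exp (-(l + r k) * x) := by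
        simp only [← tsum_mul_left, mul_left_comm (exp _), ← exp_add, ← add_mul, neg_add]
    _ = ∑' k, a k / (l + r k) := by
        rw [← integral_tsum_of_summable_integral_norm integrable_term summable_norm]
        simp only [integral_term]

theorem neg_sq_div_le_add {a b c : ℝ} (ha : 0 < a) : -(b ^ 2 / a) ≤ 2 * c * b + c ^ 2 * a := by
  have complete_sq : 2 * c * b + c ^ 2 * a + b ^ 2 / a = (c * a + b) ^ 2 / a := by
    field_simp
    ring
  have : 0 ≤ (c * a + b) ^ 2 / a := by positivity
  linarith

theorem inner_smul_add_sum_smul {V ι : Type*} [NormedAddCommGroup V] [InnerProductSpace ℝ V]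
    [Fintype ι] {e : ι → V} (he : Pairwise fun i j => inner ℝ (e i) (e j) = 0)
    (a a' : ℝ) (b b' : ι → ℝ) (x : V) :
    inner ℝ (a • x + ∑ i, b i • e i) (a' • x + ∑ i, b' i • e i) =
      a * a' * ‖x‖ ^ 2 +
        ∑ i, ((a * b' i + a' * b i) * inner ℝ x (e i) + b i * b' i * ‖e i‖ ^ 2) := by
  have inner_sum_sum :
      ∑ i, ∑ j, b' j * (b i * inner ℝ (e i) (e j)) = ∑ i, b i * b' i * ‖e i‖ ^ 2 := by
    refine Finset.sum_congr rfl fun i _ => ?_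
    rw [Finset.sum_eq_single_of_mem i (Finset.mem_univ i) fun j _ hj => by simp [he hj.symm],
      real_inner_self_eq_norm_sq]
    ring
  simp only [inner_add_left, inner_add_right, inner_sum, sum_inner, real_inner_smul_left,
    real_inner_smul_right, real_inner_self_eq_norm_sq, add_mul, Finset.sum_add_distrib]
  rw [Finset.sum_comm, inner_sum_sum]
  simp only [real_inner_comm x, mul_assoc, mul_left_comm a]
  simp only [mul_left_comm _ a]
  ring

theorem norm_sub_sum_smul_sq {V ι : Type*} [NormedAddCommGroup V] [InnerProductSpace ℝ V]
    [Fintype ι] {e : ι → V} (he : Pairwise fun i j => inner ℝ (e i) (e j) = 0) (x : V) :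
    ‖x - ∑ i, (inner ℝ x (e i) / ‖e i‖ ^ 2) • e i‖ ^ 2 =
      ‖x‖ ^ 2 - ∑ i, inner ℝ x (e i) ^ 2 / ‖e i‖ ^ 2 := by
  have h := inner_smul_add_sum_smul he 1 1 (fun i => -(inner ℝ x (e i) / ‖e i‖ ^ 2))
    (fun i => -(inner ℝ x (e i) / ‖e i‖ ^ 2)) x
  simp only [one_smul, neg_smul, Finset.sum_neg_distrib, ← sub_eq_add_neg,
    real_inner_self_eq_norm_sq, one_mul] at h
  rw [h, sub_eq_add_neg, ← Finset.sum_neg_distrib]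
  congr 1
  refine Finset.sum_congr rfl fun i _ => ?_
  rcases eq_or_ne (‖e i‖ ^ 2) 0 with h0 | _
  · simp [h0]
  · field_simp
    ring

theorem hasDerivAt_mul_wronskian_div {e e' f f' : ℝ → ℝ} {x q g : ℝ}
    (he : HasDerivAt e (e' x) x) (he' : HasDerivAt e' (q * e x) x)
    (hf : HasDerivAt f (f' x) x) (hf' : HasDerivAt f' (q * f x + g) x)
    (hfe : e x = 0 → f x = 0) (hne : e x = 0 → e' x ≠ 0) :
    HasDerivAt (fun t => f t / e t * (f' t * e t - f t * e' t))
      (((f' x * e x - f x * e' x) / e x) ^ 2 + f x * g) x := by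
  have hW : HasDerivAt (fun t => f' t * e t - f t * e' t) (e x * g) x :=
    ((hf'.mul he).sub (hf.mul he')).congr_deriv (by ring)
  by_cases hx : e x = 0
  -- At a node the junk value `f x / e x = 0` is harmless, since the Wronskian also vanishes there.
  · have hfx := hfe hx
    rw [hx, zero_mul] at hW
    rw [hasDerivAt_iff_tendsto_slope] at *
    have h := (hf.div he (hne hx)).mul hW
    simp only [hx, hfx, div_zero, zero_mul, mul_zero, zero_pow two_ne_zero, add_zero] at h ⊢
    refine h.congr' ?_
    filter_upwards [self_mem_nhdsWithin] with t ht
    simp only [Pi.div_apply, slope_def_field, hx, hfx, sub_zero, mul_zero, zero_mul, div_zero]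
    rw [div_div_div_cancel_right₀ (sub_ne_zero.2 ht), mul_div_assoc]
  · refine ((hf.div he hx).mul hW).congr_deriv ?_
    simp only [Pi.div_apply]
    field_simp

-- Picone's identity: `f / e` times the Wronskian of `f` and `e` has derivative `f * g` plus a
-- square, so nodes of `e` at which `f` vanishes as well do not obstruct the estimate.
theorem integral_mul_le_of_nodes {a : ℝ} {e e' f f' q g : ℝ → ℝ}
    (he : ∀ x ∈ Ici a, HasDerivAt e (e' x) x) (he' : ∀ x ∈ Ici a, HasDerivAt e' (q x * e x) x)
    (hf : ∀ x ∈ Ici a, HasDerivAt f (f' x) x)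
    (hf' : ∀ x ∈ Ici a, HasDerivAt f' (q x * f x + g x) x)
    (hne : ∀ x ∈ Ici a, e x = 0 → e' x ≠ 0) (hfe : ∀ x ∈ Ici a, e x = 0 → f x = 0)
    (he'_a : e' a = 0) (he_lim : Tendsto e atTop (𝓝 0)) (he'_lim : Tendsto e' atTop (𝓝 0))
    (hf'_lim : Tendsto f' atTop (𝓝 0)) (hO : f =O[atTop] e)
    (hfg : IntegrableOn (fun x => f x * g x) (Ioi a)) :
    ∫ x in Ioi a, f x * g x ≤ -(f a * f' a) := by
  set K : ℝ → ℝ := fun x => f x / e x * (f' x * e x - f x * e' x) with hK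
  have hK_deriv (x : ℝ) (hx : x ∈ Ici a) :
      HasDerivAt K (((f' x * e x - f x * e' x) / e x) ^ 2 + f x * g x) x :=
    hasDerivAt_mul_wronskian_div (he x hx) (he' x hx) (hf x hx) (hf' x hx) (hfe x hx) (hne x hx)
  have hK_a : K a = f a * f' a := by
    have : e a ≠ 0 := fun h => hne a self_mem_Ici h he'_a
    simp only [hK, he'_a]
    field_simp
    ring
  have hK_lim : Tendsto K atTop (𝓝 0) := by
    refine isBoundedUnder_le_mul_tendsto_zero (Asymptotics.div_isBoundedUnder_of_isBigO hO) ?_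
    simpa using (hf'_lim.mul he_lim).sub ((hO.trans_tendsto he_lim).mul he'_lim)
  have integral_le (b : ℝ) (hb : a ≤ b) : ∫ x in a..b, f x * g x ≤ K b - K a :=
    intervalIntegral.integral_le_sub_of_hasDeriv_right_of_le hb
      (fun x hx => (hK_deriv x hx.1).continuousAt.continuousWithinAt)
      (fun x hx => (hK_deriv x hx.1.le).hasDerivWithinAt)
      (((integrableOn_Ici_iff_integrableOn_Ioi enorm_ne_top).2 hfg).mono_set Icc_subset_Ici_self)
      (fun x _ => le_add_of_nonneg_left (sq_nonneg _))
  refine le_of_tendsto_of_tendsto (intervalIntegral_tendsto_integral_Ioi a hfg tendsto_id)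
    ((hK_lim.sub_const (K a)).trans_eq (by rw [hK_a, zero_sub])) ?_
  filter_upwards [eventually_ge_atTop a] with b hb using integral_le b hb

theorem surjective_of_injective_of_finrank_le {K V W : Type*} [Field K] [AddCommGroup V]
    [Module K V] [AddCommGroup W] [Module K W] [FiniteDimensional K V] [FiniteDimensional K W]
    {f : V →ₗ[K] W}
    (hf : Function.Injective f) (h : Module.finrank K W ≤ Module.finrank K V) :
    Function.Surjective f :=
  (f.injective_iff_surjective_of_finrank_eq_finrank
    ((f.finrank_le_finrank_of_injective hf).antisymm h)).1 hf

/-- `u` is a solution of the rescaled Airy equation `u'' x = 2 * x * u x` which is positive on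
`[0, ∞)` and decays at `+∞`, and `v` is its derivative; up to a positive factor `u x` is
`Ai (2 ^ (1 / 3) x)`. -/
structure IsDecayingAiryPair (u v : ℝ → ℝ) : Prop where
  hasDerivAt_fst (x : ℝ) : HasDerivAt u (v x) x
  hasDerivAt_snd (x : ℝ) : HasDerivAt v (2 * x * u x) x
  pos (x : ℝ) (hx : 0 ≤ x) : 0 < u x
  tendsto_fst : Tendsto u atTop (𝓝 0)

/-- The quantity `v² / 2 - x u²`, an antiderivative of `-u²` along the Airy equation. It evaluates
the tail integral `∫ t in Ioi x, u t ^ 2` of a decaying solution. -/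
def airyEnergy (u v : ℝ → ℝ) (x : ℝ) : ℝ := v x ^ 2 / 2 - x * u x ^ 2

/-- The sequence `δ` lists in increasing order the absolute values of the negative zeros of `v`;
for the derivative `v` of the Airy function these are the numbers `δ'₁ < δ'₂ < ⋯`. -/
structure IsNegZeroEnumeration (v : ℝ → ℝ) (δ : ℕ → ℝ) : Prop where
  pos (k : ℕ) : 0 < δ k
  strictMono : StrictMono δ
  apply_neg (k : ℕ) : v (-δ k) = 0
  exists_eq_neg (x : ℝ) (hx : x < 0) (hv : v x = 0) : ∃ k, x = -δ k

namespace IsDecayingAiryPair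

variable {u v : ℝ → ℝ} {δ : ℕ → ℝ}

theorem continuous_fst (A : IsDecayingAiryPair u v) : Continuous u :=
  continuous_iff_continuousAt.2 fun x => (A.hasDerivAt_fst x).continuousAt

theorem continuous_snd (A : IsDecayingAiryPair u v) : Continuous v :=
  continuous_iff_continuousAt.2 fun x => (A.hasDerivAt_snd x).continuousAt

theorem monotoneOn_snd (A : IsDecayingAiryPair u v) : MonotoneOn v (Ici 0) := by
  refine monotoneOn_of_hasDerivWithinAt_nonneg (convex_Ici 0) A.continuous_snd.continuousOn
    (fun x _ => (A.hasDerivAt_snd x).hasDerivWithinAt) fun x hx => ?_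
  rw [interior_Ici] at hx
  have hx : 0 < x := hx
  have := A.pos x hx.le
  positivity

theorem snd_neg (A : IsDecayingAiryPair u v) {x : ℝ} (hx : 0 ≤ x) : v x < 0 := by
  by_contra! hv
  have u_mono : MonotoneOn u (Ici x) :=
    monotoneOn_of_hasDerivWithinAt_nonneg (convex_Ici x) A.continuous_fst.continuousOn
      (fun t _ => (A.hasDerivAt_fst t).hasDerivWithinAt) fun t ht =>
        have ht : x ≤ t := interior_subset ht
        hv.trans (A.monotoneOn_snd hx (hx.trans ht) ht)
  refine (A.pos x hx).not_ge (ge_of_tendsto A.tendsto_fst ?_)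
  filter_upwards [eventually_ge_atTop x] with t ht using u_mono self_mem_Ici ht ht

theorem antitoneOn_fst (A : IsDecayingAiryPair u v) : AntitoneOn u (Ici 0) :=
  antitoneOn_of_hasDerivWithinAt_nonpos (convex_Ici 0) A.continuous_fst.continuousOn
    (fun x _ => (A.hasDerivAt_fst x).hasDerivWithinAt)
    fun _ hx => (A.snd_neg (interior_subset hx)).le

theorem tendsto_snd (A : IsDecayingAiryPair u v) : Tendsto v atTop (𝓝 0) := by
  have sub_le_snd (x : ℝ) (hx : 1 ≤ x) : u x - u (x - 1) ≤ v x := by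
    obtain ⟨c, hc, hslope⟩ := exists_hasDerivAt_eq_slope u v (sub_one_lt x)
      A.continuous_fst.continuousOn fun t _ => A.hasDerivAt_fst t
    rw [sub_sub_cancel, div_one] at hslope
    exact hslope ▸ A.monotoneOn_snd (mem_Ici.2 (by linarith [hc.1])) (mem_Ici.2 (by linarith))
      hc.2.le
  have sub_lim : Tendsto (fun x => u x - u (x - 1)) atTop (𝓝 0) := by
    simpa [sub_eq_add_neg] using A.tendsto_fst.sub
      (A.tendsto_fst.comp (tendsto_atTop_add_const_right _ (-1) tendsto_id))
  refine tendsto_of_tendsto_of_tendsto_of_le_of_le' sub_lim tendsto_const_nhds ?_ ?_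
  · filter_upwards [eventually_ge_atTop 1] with x hx using sub_le_snd x hx
  · filter_upwards [eventually_ge_atTop 0] with x hx using (A.snd_neg hx).le

theorem two_mul_mul_fst_sq_le_snd_sq (A : IsDecayingAiryPair u v) {x : ℝ} (hx : 0 ≤ x) :
    2 * x * u x ^ 2 ≤ v x ^ 2 := by
  have hderiv (t : ℝ) :
      HasDerivAt (fun t => v t ^ 2 - 2 * x * u t ^ 2) (4 * (t - x) * u t * v t) t :=
    (((A.hasDerivAt_snd t).pow 2).sub (((A.hasDerivAt_fst t).pow 2).const_mul (2 * x))).congr_deriv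
      (by push_cast; ring)
  have hanti : AntitoneOn (fun t => v t ^ 2 - 2 * x * u t ^ 2) (Ici x) := by
    refine antitoneOn_of_hasDerivWithinAt_nonpos (convex_Ici x)
      (fun t _ => (hderiv t).continuousAt.continuousWithinAt)
      (fun t _ => (hderiv t).hasDerivWithinAt) fun t ht => ?_
    have ht : x ≤ t := interior_subset ht
    have hu := (A.pos t (hx.trans ht)).le
    exact mul_nonpos_of_nonneg_of_nonpos
      (mul_nonneg (by linarith) hu) (A.snd_neg (hx.trans ht)).le
  have hlim : Tendsto (fun t => v t ^ 2 - 2 * x * u t ^ 2) atTop (𝓝 0) := by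
    simpa using (A.tendsto_snd.pow 2).sub ((A.tendsto_fst.pow 2).const_mul (2 * x))
  refine sub_nonneg.1 (le_of_tendsto hlim ?_)
  filter_upwards [eventually_ge_atTop x] with t ht using hanti self_mem_Ici ht ht

theorem hasDerivAt_airyEnergy (A : IsDecayingAiryPair u v) (x : ℝ) :
    HasDerivAt (airyEnergy u v) (-u x ^ 2) x :=
  ((((A.hasDerivAt_snd x).pow 2).div_const 2).sub
    ((hasDerivAt_id x).mul ((A.hasDerivAt_fst x).pow 2))).congr_deriv
    (by simp only [id, Pi.pow_apply]; push_cast; ring)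

theorem tendsto_airyEnergy (A : IsDecayingAiryPair u v) :
    Tendsto (airyEnergy u v) atTop (𝓝 0) := by
  have hlim : Tendsto (fun x => v x ^ 2 / 2) atTop (𝓝 0) := by
    simpa using (A.tendsto_snd.pow 2).div_const 2
  refine tendsto_of_tendsto_of_tendsto_of_le_of_le' tendsto_const_nhds hlim ?_ ?_ <;>
    filter_upwards [eventually_ge_atTop 0] with x hx
  · have := A.two_mul_mul_fst_sq_le_snd_sq hx
    simp only [airyEnergy]
    linarith
  · exact sub_le_self _ (by positivity)

theorem airyEnergy_pos (A : IsDecayingAiryPair u v) (x : ℝ) : 0 < airyEnergy u v x := by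
  have hanti : Antitone (airyEnergy u v) :=
    antitone_of_hasDerivAt_nonpos A.hasDerivAt_airyEnergy fun t => neg_nonpos.2 (sq_nonneg (u t))
  have hstrict : StrictAntiOn (airyEnergy u v) (Ici 0) := by
    refine strictAntiOn_of_hasDerivWithinAt_neg (convex_Ici 0)
      (fun t _ => (A.hasDerivAt_airyEnergy t).continuousAt.continuousWithinAt)
      (fun t _ => (A.hasDerivAt_airyEnergy t).hasDerivWithinAt) fun t ht => ?_
    have := A.pos t (interior_subset ht)
    exact neg_neg_of_pos (by positivity)
  have hm : 0 ≤ max x 0 := le_max_right x 0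
  calc 0 ≤ airyEnergy u v (max x 0 + 1) := hanti.le_of_tendsto A.tendsto_airyEnergy _
    _ < airyEnergy u v (max x 0) := hstrict hm (mem_Ici.2 (by linarith)) (lt_add_one _)
    _ ≤ airyEnergy u v x := hanti (le_max_left x 0)

theorem fst_ne_zero (A : IsDecayingAiryPair u v) {x : ℝ} (hv : v x = 0) : u x ≠ 0 := fun hu => by
  simpa [airyEnergy, hu, hv] using A.airyEnergy_pos x

theorem snd_ne_zero (A : IsDecayingAiryPair u v) {x : ℝ} (hu : u x = 0) : v x ≠ 0 := fun hv =>
  A.fst_ne_zero hv hu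

theorem integrableOn_sq_translate (A : IsDecayingAiryPair u v) (x : ℝ) :
    IntegrableOn (fun h => u (h + x) ^ 2) (Ioi 0) ∧
      ∫ h in Ioi (0 : ℝ), u (h + x) ^ 2 = airyEnergy u v x := by
  have hderiv (h : ℝ) (_ : h ∈ Ici (0 : ℝ)) :
      HasDerivAt (fun h => -airyEnergy u v (h + x)) (u (h + x) ^ 2) h := by
    simpa using ((A.hasDerivAt_airyEnergy (h + x)).comp_add_const h x).fun_neg
  have hlim : Tendsto (fun h => -airyEnergy u v (h + x)) atTop (𝓝 0) := by
    simpa using (A.tendsto_airyEnergy.comp (tendsto_atTop_add_const_right _ x tendsto_id)).neg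
  have hnonneg (h : ℝ) (_ : h ∈ Ioi (0 : ℝ)) : 0 ≤ u (h + x) ^ 2 := sq_nonneg _
  refine ⟨integrableOn_Ioi_deriv_of_nonneg' hderiv hnonneg hlim, ?_⟩
  simpa using integral_Ioi_of_hasDerivAt_of_nonneg' hderiv hnonneg hlim

theorem memLp_translate (A : IsDecayingAiryPair u v) (x : ℝ) :
    MemLp (fun h => u (h + x)) 2 (volume.restrict (Ioi (0 : ℝ))) :=
  (memLp_two_iff_integrable_sq
    (A.continuous_fst.comp (continuous_add_const x)).aestronglyMeasurable).2
    (A.integrableOn_sq_translate x).1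

/-- The translate `h ↦ u (h + x)` as a vector of `L²(0, ∞)`. At the negative zeros `x` of `v` the
translates are the Neumann eigenfunctions of `f'' - 2 h f` on the half-line. -/
def translate (A : IsDecayingAiryPair u v) (x : ℝ) : Lp ℝ 2 (volume.restrict (Ioi (0 : ℝ))) :=
  (A.memLp_translate x).toLp

theorem coeFn_sum_smul_translate (A : IsDecayingAiryPair u v) {ι : Type*} [Fintype ι]
    (c x : ι → ℝ) :
    ⇑(∑ i, c i • A.translate (x i)) =ᵐ[volume.restrict (Ioi (0 : ℝ))]
      fun h => ∑ i, c i * u (h + x i) := by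
  have hterm (i : ι) : ⇑(c i • A.translate (x i)) =ᵐ[volume.restrict (Ioi (0 : ℝ))]
      fun h => c i * u (h + x i) := by
    filter_upwards [Lp.coeFn_smul (c i) (A.translate (x i)), (A.memLp_translate (x i)).coeFn_toLp]
      with h hsmul htoLp
    rw [hsmul, Pi.smul_apply, translate, htoLp, smul_eq_mul]
  filter_upwards [Lp.coeFn_finsetSum Finset.univ fun i => c i • A.translate (x i),
    ae_all_iff.2 hterm] with h hsum hterm
  rw [hsum, Finset.sum_apply]
  exact Finset.sum_congr rfl fun i _ => hterm i

theorem inner_sum_smul_translate (A : IsDecayingAiryPair u v) {ι : Type*} [Fintype ι]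
    (b c x : ι → ℝ) :
    inner ℝ (∑ i, b i • A.translate (x i)) (∑ i, c i • A.translate (x i)) =
      ∫ h in Ioi (0 : ℝ), (∑ i, c i * u (h + x i)) * ∑ i, b i * u (h + x i) := by
  rw [L2.inner_def]
  refine integral_congr_ae ?_
  filter_upwards [A.coeFn_sum_smul_translate b x, A.coeFn_sum_smul_translate c x] with h hb hc
  rw [hb, hc, real_inner_eq_re_inner, RCLike.inner_apply]
  simp

theorem inner_translate (A : IsDecayingAiryPair u v) (x y : ℝ) :
    inner ℝ (A.translate x) (A.translate y) = ∫ h in Ioi (0 : ℝ), u (h + x) * u (h + y) := by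
  rw [L2.inner_def]
  refine integral_congr_ae ?_
  filter_upwards [(A.memLp_translate x).coeFn_toLp, (A.memLp_translate y).coeFn_toLp]
    with h hx hy
  simp only [translate, hx, hy, RCLike.inner_apply]
  simp [mul_comm]

theorem norm_translate_sq (A : IsDecayingAiryPair u v) (x : ℝ) :
    ‖A.translate x‖ ^ 2 = airyEnergy u v x := by
  rw [← real_inner_self_eq_norm_sq, A.inner_translate, ← (A.integrableOn_sq_translate x).2]
  simp only [sq]

theorem norm_translate_sq_pos (A : IsDecayingAiryPair u v) (x : ℝ) : 0 < ‖A.translate x‖ ^ 2 :=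
  (A.norm_translate_sq x).symm ▸ A.airyEnergy_pos x

theorem two_mul_sub_mul_inner_translate (A : IsDecayingAiryPair u v) (x y : ℝ) :
    2 * (x - y) * inner ℝ (A.translate x) (A.translate y) = u x * v y - v x * u y := by
  have hderiv (h : ℝ) (_ : h ∈ Ici (0 : ℝ)) :
      HasDerivAt (fun h => v (h + x) * u (h + y) - u (h + x) * v (h + y))
        (2 * (x - y) * (u (h + x) * u (h + y))) h :=
    ((((A.hasDerivAt_snd (h + x)).comp_add_const h x).mul
      ((A.hasDerivAt_fst (h + y)).comp_add_const h y)).sub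
      (((A.hasDerivAt_fst (h + x)).comp_add_const h x).mul
      ((A.hasDerivAt_snd (h + y)).comp_add_const h y))).congr_deriv (by ring)
  have hint : IntegrableOn (fun h => 2 * (x - y) * (u (h + x) * u (h + y))) (Ioi 0) :=
    ((A.memLp_translate x).integrable_mul (A.memLp_translate y)).const_mul _
  have hshift (z : ℝ) : Tendsto (fun h => h + z) atTop atTop :=
    tendsto_atTop_add_const_right _ z tendsto_id
  have hlim : Tendsto (fun h => v (h + x) * u (h + y) - u (h + x) * v (h + y)) atTop (𝓝 0) := by
    simpa using ((A.tendsto_snd.comp (hshift x)).mul (A.tendsto_fst.comp (hshift y))).sub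
      ((A.tendsto_fst.comp (hshift x)).mul (A.tendsto_snd.comp (hshift y)))
  have := integral_Ioi_of_hasDerivAt_of_tendsto' hderiv hint hlim
  rw [A.inner_translate, ← integral_const_mul, this]
  simp only [zero_add]
  ring

-- Each `u (h + x i)` solves the equation `e'' = 2 (h + p) e` of `e h = u (h + p)` up to the error
-- term `2 (x i - p) u (h + x i)`.
theorem inner_sum_smul_translate_le (A : IsDecayingAiryPair u v) {ι : Type*} [Fintype ι] {p : ℝ}
    {c x : ι → ℝ} (hp : v p = 0) (hpx : ∀ i, p ≤ x i)
    (hnodes : ∀ z, p ≤ z → u z = 0 → ∑ i, c i * u (z - p + x i) = 0) :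
    inner ℝ (∑ i, (2 * (x i - p) * c i) • A.translate (x i)) (∑ i, c i • A.translate (x i)) ≤
      -((∑ i, c i * u (x i)) * ∑ i, c i * v (x i)) := by
  have hshift (z : ℝ) : Tendsto (fun h => h + z) atTop atTop :=
    tendsto_atTop_add_const_right _ z tendsto_id
  have hO : (fun h => ∑ i, c i * u (h + x i)) =O[atTop] fun h => u (h + p) := by
    refine Asymptotics.IsBigO.fun_sum fun i _ => Asymptotics.IsBigO.const_mul_left ?_ _
    refine Asymptotics.IsBigO.of_bound 1 ?_
    filter_upwards [eventually_ge_atTop (-p)] with h hh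
    have hhp : 0 ≤ h + p := by linarith
    have hhx : h + p ≤ h + x i := by linarith [hpx i]
    rw [one_mul, norm_of_nonneg (A.pos _ hhp).le, norm_of_nonneg (A.pos _ (hhp.trans hhx)).le]
    exact A.antitoneOn_fst hhp (hhp.trans hhx) hhx
  have hmemLp (b : ι → ℝ) :
      MemLp (fun h => ∑ i, b i * u (h + x i)) 2 (volume.restrict (Ioi (0 : ℝ))) :=
    memLp_finsetSum _ fun i _ => (A.memLp_translate (x i)).const_mul (b i)
  have key := integral_mul_le_of_nodes (a := 0) (q := fun h => 2 * (h + p))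
    (e := fun h => u (h + p)) (e' := fun h => v (h + p))
    (f := fun h => ∑ i, c i * u (h + x i)) (f' := fun h => ∑ i, c i * v (h + x i))
    (g := fun h => ∑ i, 2 * (x i - p) * c i * u (h + x i))
    (fun h _ => (A.hasDerivAt_fst (h + p)).comp_add_const h p)
    (fun h _ => (A.hasDerivAt_snd (h + p)).comp_add_const h p)
    (fun h _ => HasDerivAt.fun_sum fun i _ =>
      ((A.hasDerivAt_fst (h + x i)).comp_add_const h (x i)).const_mul (c i))
    (fun h _ => (HasDerivAt.fun_sum fun i _ =>
      ((A.hasDerivAt_snd (h + x i)).comp_add_const h (x i)).const_mul (c i)).congr_deriv (by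
        rw [Finset.mul_sum, ← Finset.sum_add_distrib]
        exact Finset.sum_congr rfl fun i _ => by ring))
    (fun h _ => A.snd_ne_zero)
    (fun h hh hu => by simpa using hnodes (h + p) (le_add_of_nonneg_left hh) hu)
    (by simpa using hp) (A.tendsto_fst.comp (hshift p)) (A.tendsto_snd.comp (hshift p))
    (by simpa using tendsto_finsetSum Finset.univ fun i _ =>
      (A.tendsto_snd.comp (hshift (x i))).const_mul (c i))
    hO ((hmemLp c).integrable_mul (hmemLp _))
  simpa [A.inner_sum_smul_translate] using key

theorem tendsto_negZero (A : IsDecayingAiryPair u v) (Z : IsNegZeroEnumeration v δ) :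
    Tendsto δ atTop atTop := by
  refine (tendsto_atTop_of_monotone Z.strictMono.monotone).resolve_right ?_
  rintro ⟨l, hl⟩
  have hlim : Tendsto (fun k => -δ k) atTop (𝓝[≠] (-l)) := by
    refine tendsto_nhdsWithin_iff.2 ⟨hl.neg, Eventually.of_forall fun k hk => ?_⟩
    have : δ (k + 1) ≤ l := Z.strictMono.monotone.ge_of_tendsto hl _
    have := Z.strictMono k.lt_succ_self
    have := neg_inj.1 hk
    linarith
  have hv : v (-l) = 0 := by
    refine tendsto_nhds_unique (A.continuous_snd.continuousAt.tendsto.comp hl.neg) ?_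
    simp only [Function.comp_def, Z.apply_neg, tendsto_const_nhds]
  have hl0 : 0 < l := (Z.pos 0).trans_le (Z.strictMono.monotone.ge_of_tendsto hl 0)
  have hderiv_ne : 2 * -l * u (-l) ≠ 0 := mul_ne_zero (by linarith) (A.fst_ne_zero hv)
  have hne : ∀ᶠ z in 𝓝[≠] (-l), v z ≠ 0 := (A.hasDerivAt_snd (-l)).eventually_ne hderiv_ne
  obtain ⟨k, hk⟩ := (hlim.eventually hne).exists
  exact hk (Z.apply_neg k)

theorem inner_translate_negZero (A : IsDecayingAiryPair u v) (Z : IsNegZeroEnumeration v δ)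
    (y : ℝ) (k : ℕ) :
    2 * (y + δ k) * inner ℝ (A.translate y) (A.translate (-δ k)) = -(v y * u (-δ k)) := by
  simpa [Z.apply_neg k] using A.two_mul_sub_mul_inner_translate y (-δ k)

theorem norm_translate_negZero_sq (A : IsDecayingAiryPair u v) (Z : IsNegZeroEnumeration v δ)
    (k : ℕ) : ‖A.translate (-δ k)‖ ^ 2 = δ k * u (-δ k) ^ 2 := by
  rw [A.norm_translate_sq, airyEnergy, Z.apply_neg k]
  ring

theorem pairwise_inner_translate_negZero (A : IsDecayingAiryPair u v)
    (Z : IsNegZeroEnumeration v δ) :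
    Pairwise fun j k => inner ℝ (A.translate (-δ j)) (A.translate (-δ k)) = 0 := by
  intro j k hjk
  have h := A.inner_translate_negZero Z (-δ j) k
  rw [Z.apply_neg j, zero_mul, neg_zero] at h
  refine (mul_eq_zero.1 h).resolve_left fun h0 => hjk (Z.strictMono.injective ?_)
  linarith

theorem negZero_energy_le (A : IsDecayingAiryPair u v) (Z : IsNegZeroEnumeration v δ) {N : ℕ}
    {a y : ℝ} {c : Fin N → ℝ} (hy : -δ N ≤ y)
    (hnodes : ∀ z, -δ N ≤ z → u z = 0 →
      a * u (z + δ N + y) + ∑ k : Fin N, c k * u (z + δ N - δ k) = 0) :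
    a ^ 2 * (y + δ N) * ‖A.translate y‖ ^ 2 +
        ∑ k : Fin N, (δ N - δ k) * (2 * a * c k * inner ℝ (A.translate y) (A.translate (-δ k)) +
          c k ^ 2 * ‖A.translate (-δ k)‖ ^ 2) ≤
      -(a ^ 2 * (u y * v y)) / 2 := by
  have hle := A.inner_sum_smul_translate_le (p := -δ N) (c := fun o : Option (Fin N) => o.elim a c)
    (x := fun o => o.elim y fun k => -δ k) (Z.apply_neg N)
    (by
      rintro (_ | k)
      · exact hy
      · exact neg_le_neg (Z.strictMono.monotone k.isLt.le))
    (fun z hz hu => by simpa [Fintype.sum_option, sub_eq_add_neg] using hnodes z hz hu)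
  have horth := (A.pairwise_inner_translate_negZero Z).comp_of_injective
    (Fin.val_injective (n := N))
  simp only [Fintype.sum_option, Option.elim, inner_smul_add_sum_smul horth, Z.apply_neg,
    mul_zero, Finset.sum_const_zero, add_zero] at hle
  have hcross : ∑ k : Fin N, a * c k * (2 * (y + δ k) *
      inner ℝ (A.translate y) (A.translate (-δ k))) = -(a * v y * ∑ k, c k * u (-δ k)) := by
    simp only [A.inner_translate_negZero Z, Finset.mul_sum, ← Finset.sum_neg_distrib]
    exact Finset.sum_congr rfl fun k _ => by ring
  have hsplit : ∑ k : Fin N, ((2 * (y - -δ N) * a * c k + a * (2 * (-δ k - -δ N) * c k)) *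
        inner ℝ (A.translate y) (A.translate (-δ k)) +
          2 * (-δ k - -δ N) * c k * c k * ‖A.translate (-δ k)‖ ^ 2) =
      2 * ∑ k : Fin N, (δ N - δ k) * (2 * a * c k * inner ℝ (A.translate y) (A.translate (-δ k)) +
          c k ^ 2 * ‖A.translate (-δ k)‖ ^ 2) +
        ∑ k : Fin N, a * c k * (2 * (y + δ k) *
          inner ℝ (A.translate y) (A.translate (-δ k))) := by
    rw [Finset.mul_sum, ← Finset.sum_add_distrib]
    exact Finset.sum_congr rfl fun k _ => by ring
  rw [hsplit, hcross] at hle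
  linarith

theorem exists_negZero_between (A : IsDecayingAiryPair u v) (Z : IsNegZeroEnumeration v δ)
    {z z' : ℝ} (hzz' : z < z') (hz : u z = 0) (hz' : u z' = 0) :
    ∃ k, z < -δ k ∧ -δ k < z' := by
  obtain ⟨c, hc, hvc⟩ := exists_hasDerivAt_eq_zero hzz' A.continuous_fst.continuousOn
    (hz.trans hz'.symm) fun t _ => A.hasDerivAt_fst t
  have hc0 : c < 0 := not_le.1 fun h => (A.snd_neg h).ne hvc
  obtain ⟨k, rfl⟩ := Z.exists_eq_neg c hc0 hvc
  exact ⟨k, hc⟩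

theorem exists_negZero_gt (A : IsDecayingAiryPair u v) (Z : IsNegZeroEnumeration v δ)
    {z : ℝ} (hz : u z = 0) : ∃ k, z < -δ k := by
  have hz0 : z < 0 := not_le.1 fun h => (A.pos z h).ne' hz
  obtain ⟨b, hb, hvb⟩ := exists_hasDerivAt_eq_slope u v hz0 A.continuous_fst.continuousOn
    fun t _ => A.hasDerivAt_fst t
  have hvb_pos : 0 < v b := by
    rw [hvb, hz, sub_zero]
    exact div_pos (A.pos 0 le_rfl) (by linarith)
  obtain ⟨c, hc, hvc⟩ := intermediate_value_Ioo' hb.2.le A.continuous_snd.continuousOn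
    ⟨A.snd_neg le_rfl, hvb_pos⟩
  obtain ⟨k, rfl⟩ := Z.exists_eq_neg c hc.2 hvc
  exact ⟨k, hb.1.trans hc.1⟩

-- Counting the critical points to the right of a zero of `u` is injective because zeros and
-- critical points interlace.
theorem nodes_finite_and_ncard_le (A : IsDecayingAiryPair u v) (Z : IsNegZeroEnumeration v δ)
    (N : ℕ) : {z | -δ N < z ∧ u z = 0}.Finite ∧ {z | -δ N < z ∧ u z = 0}.ncard ≤ N := by
  let count (z : ℝ) : ℕ := ((Finset.range N).filter fun k => z < -δ k).card
  have mem_range {z : ℝ} (hz : -δ N < z) {k : ℕ} (hk : z < -δ k) : k ∈ Finset.range N :=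
    Finset.mem_range.2 (Z.strictMono.lt_iff_lt.1 (by linarith))
  have hanti : StrictAntiOn count {z | -δ N < z ∧ u z = 0} := by
    intro z hz z' hz' hzz'
    obtain ⟨k, hk, hk'⟩ := A.exists_negZero_between Z hzz' hz.2 hz'.2
    refine Finset.card_lt_card (Finset.ssubset_iff_of_subset
      (Finset.monotone_filter_right _ fun j _ => hzz'.trans) |>.2 ⟨k, ?_, ?_⟩)
    · exact Finset.mem_filter.2 ⟨mem_range hz.1 hk, hk⟩
    · exact fun h => (Finset.mem_filter.1 h).2.not_gt hk'
  have hmaps : MapsTo count {z | -δ N < z ∧ u z = 0} (Finset.Icc 1 N) := by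
    intro z hz
    obtain ⟨k, hk⟩ := A.exists_negZero_gt Z hz.2
    refine Finset.mem_coe.2 (Finset.mem_Icc.2 ⟨Finset.card_pos.2 ⟨k, ?_⟩, ?_⟩)
    · exact Finset.mem_filter.2 ⟨mem_range hz.1 hk, hk⟩
    · exact (Finset.card_filter_le _ _).trans_eq (Finset.card_range N)
  refine ⟨Set.Finite.of_injOn hmaps hanti.injOn (Finset.finite_toSet _), ?_⟩
  simpa using Set.ncard_le_ncard_of_injOn count hmaps hanti.injOn (Finset.finite_toSet _)

theorem eq_zero_of_vanishing_at_nodes (A : IsDecayingAiryPair u v) (Z : IsNegZeroEnumeration v δ)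
    {N : ℕ} {c : Fin N → ℝ}
    (hnodes : ∀ z, -δ N ≤ z → u z = 0 → ∑ k : Fin N, c k * u (z + δ N - δ k) = 0) : c = 0 := by
  have hgap (k : Fin N) : 0 < δ N - δ k := sub_pos.2 (Z.strictMono k.isLt)
  have hterm (k : Fin N) : 0 ≤ (δ N - δ k) * (c k ^ 2 * ‖A.translate (-δ k)‖ ^ 2) :=
    mul_nonneg (hgap k).le (by positivity)
  have hsum : ∑ k : Fin N, (δ N - δ k) * (c k ^ 2 * ‖A.translate (-δ k)‖ ^ 2) ≤ 0 := by
    simpa using A.negZero_energy_le Z (a := 0) (c := c) le_rfl (by simpa using hnodes)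
  funext k
  have hk := (Finset.sum_eq_zero_iff_of_nonneg fun j _ => hterm j).1
    (hsum.antisymm (Finset.sum_nonneg fun j _ => hterm j)) k (Finset.mem_univ k)
  simpa only [mul_eq_zero, (hgap k).ne', (A.norm_translate_sq_pos (-δ k)).ne', false_or, or_false,
    pow_eq_zero_iff two_ne_zero, Pi.zero_apply] using hk

theorem exists_vanishing_at_nodes (A : IsDecayingAiryPair u v) (Z : IsNegZeroEnumeration v δ)
    (N : ℕ) (φ : ℝ → ℝ) :
    ∃ c : Fin N → ℝ, ∀ z, -δ N ≤ z → u z = 0 →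
      φ z + ∑ k : Fin N, c k * u (z + δ N - δ k) = 0 := by
  obtain ⟨hfin, hcard⟩ := A.nodes_finite_and_ncard_le Z N
  set S := {z | -δ N < z ∧ u z = 0}
  have mem_nodes {z : ℝ} (hz : -δ N ≤ z) (hu : u z = 0) : z ∈ S :=
    ⟨hz.lt_of_ne fun h => A.fst_ne_zero (Z.apply_neg N) (h ▸ hu), hu⟩
  let M : Matrix S (Fin N) ℝ := Matrix.of fun z k => u (z + δ N - δ k)
  have hM (c : Fin N → ℝ) (z : S) : M.mulVecLin c z = ∑ k, c k * u (z + δ N - δ k) := by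
    simp [M, Matrix.mulVec, dotProduct, mul_comm]
  have hinj : Function.Injective M.mulVecLin := by
    refine (injective_iff_map_eq_zero _).2 fun c hc => A.eq_zero_of_vanishing_at_nodes Z ?_
    intro z hz hu
    rw [← hM c ⟨z, mem_nodes hz hu⟩, hc, Pi.zero_apply]
  have := hfin.fintype
  have hrank : Module.finrank ℝ (S → ℝ) ≤ Module.finrank ℝ (Fin N → ℝ) := by
    rwa [Module.finrank_fintype_fun_eq_card, Module.finrank_fin_fun, ← Nat.card_eq_fintype_card]
  obtain ⟨c, hc⟩ := surjective_of_injective_of_finrank_le hinj hrank fun z => -φ z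
  exact ⟨c, fun z hz hu => by rw [← hM c ⟨z, mem_nodes hz hu⟩, hc, add_neg_cancel]⟩

/-- The orthogonal projection of `A.translate y` to the span of the pairwise orthogonal translates
at `-δ 0, …, -δ (N - 1)`. -/
def negZeroProj (A : IsDecayingAiryPair u v) (δ : ℕ → ℝ) (N : ℕ) (y : ℝ) :
    Lp ℝ 2 (volume.restrict (Ioi (0 : ℝ))) :=
  ∑ k : Fin N, (inner ℝ (A.translate y) (A.translate (-δ k)) / ‖A.translate (-δ k)‖ ^ 2) •
    A.translate (-δ k)

theorem mul_norm_translate_sub_negZeroProj_sq_le (A : IsDecayingAiryPair u v)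
    (Z : IsNegZeroEnumeration v δ) (N : ℕ) {y : ℝ} (hy : 0 ≤ y) :
    (y + δ N) * ‖A.translate y - A.negZeroProj δ N y‖ ^ 2 ≤ -(u y * v y) / 2 := by
  obtain ⟨c, hc⟩ := A.exists_vanishing_at_nodes Z N fun z => u (z + δ N + y)
  set β : Fin N → ℝ := fun k => inner ℝ (A.translate y) (A.translate (-δ k))
  set D : Fin N → ℝ := fun k => ‖A.translate (-δ k)‖ ^ 2
  have hle : (y + δ N) * ‖A.translate y‖ ^ 2 +
      ∑ k : Fin N, (δ N - δ k) * (2 * c k * β k + c k ^ 2 * D k) ≤ -(u y * v y) / 2 := by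
    simpa using A.negZero_energy_le Z (a := 1) (y := y) (c := c) (by linarith [Z.pos N])
      (by simpa only [one_mul] using hc)
  have hterm (k : Fin N) :
      -((y + δ N) * (β k ^ 2 / D k)) ≤ (δ N - δ k) * (2 * c k * β k + c k ^ 2 * D k) := by
    have hD : 0 < D k := A.norm_translate_sq_pos _
    have hgap : 0 ≤ δ N - δ k := sub_nonneg.2 (Z.strictMono.monotone k.isLt.le)
    have hyk : 0 ≤ (y + δ k) * (β k ^ 2 / D k) :=
      mul_nonneg (by linarith [Z.pos k]) (by positivity)
    calc -((y + δ N) * (β k ^ 2 / D k)) ≤ (δ N - δ k) * -(β k ^ 2 / D k) := by linarith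
      _ ≤ _ := mul_le_mul_of_nonneg_left (neg_sq_div_le_add hD) hgap
  calc (y + δ N) * ‖A.translate y - A.negZeroProj δ N y‖ ^ 2
      = (y + δ N) * ‖A.translate y‖ ^ 2 + ∑ k, -((y + δ N) * (β k ^ 2 / D k)) := by
        rw [negZeroProj, norm_sub_sum_smul_sq fun j k hjk =>
          A.pairwise_inner_translate_negZero Z (Fin.val_ne_of_ne hjk), mul_sub, Finset.mul_sum,
          sub_eq_add_neg, Finset.sum_neg_distrib]
    _ ≤ _ := (add_le_add_right (Finset.sum_le_sum fun k _ => hterm k) _).trans hle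

theorem tendsto_negZeroProj (A : IsDecayingAiryPair u v) (Z : IsNegZeroEnumeration v δ)
    {y : ℝ} (hy : 0 ≤ y) :
    Tendsto (fun N => A.negZeroProj δ N y) atTop (𝓝 (A.translate y)) := by
  have hbound (N : ℕ) :
      ‖A.translate y - A.negZeroProj δ N y‖ ^ 2 ≤ -(u y * v y) / 2 / (y + δ N) :=
    (le_div_iff₀' (by linarith [Z.pos N])).2 (A.mul_norm_translate_sub_negZeroProj_sq_le Z N hy)
  have hlim : Tendsto (fun N => -(u y * v y) / 2 / (y + δ N)) atTop (𝓝 0) :=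
    tendsto_const_nhds.div_atTop (tendsto_atTop_add_const_left _ y (A.tendsto_negZero Z))
  rw [tendsto_iff_norm_sub_tendsto_zero]
  simpa only [sqrt_sq (norm_nonneg _), sqrt_zero, norm_sub_rev] using
    (squeeze_zero (fun N => sq_nonneg _) hbound hlim).sqrt

theorem inner_translate_negZeroProj (A : IsDecayingAiryPair u v) (Z : IsNegZeroEnumeration v δ)
    (N : ℕ) {x y : ℝ} (hx : 0 ≤ x) (hy : 0 ≤ y) :
    inner ℝ (A.translate x) (A.negZeroProj δ N y) =
      v x * v y / 2 * ∑ k ∈ Finset.range N, 1 / (2 * δ k * (x + δ k) * (y + δ k)) := by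
  rw [negZeroProj, inner_sum, Finset.mul_sum, ← Fin.sum_univ_eq_sum_range
    fun k => v x * v y / 2 * (1 / (2 * δ k * (x + δ k) * (y + δ k)))]
  refine Finset.sum_congr rfl fun k _ => ?_
  have hu := A.fst_ne_zero (Z.apply_neg k)
  have hδ := Z.pos k
  have hxk : x + δ k ≠ 0 := by positivity
  have hyk : y + δ k ≠ 0 := by positivity
  have hβx := A.inner_translate_negZero Z x k
  have hβy := A.inner_translate_negZero Z y k
  rw [mul_comm, ← eq_div_iff (by positivity)] at hβx hβy
  rw [real_inner_smul_right, A.norm_translate_negZero_sq Z, hβx, hβy]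
  field_simp

theorem hasSum_partialFraction (A : IsDecayingAiryPair u v) (Z : IsNegZeroEnumeration v δ)
    {x y : ℝ} (hx : 0 ≤ x) (hy : 0 ≤ y) (hxy : x ≠ y) :
    HasSum (fun k => 1 / (2 * δ k * (x + δ k) * (y + δ k)))
      ((u x / v x - u y / v y) / (x - y)) := by
  have hvx := (A.snd_neg hx).ne
  have hvy := (A.snd_neg hy).ne
  have hinner : inner ℝ (A.translate x) (A.translate y) =
      v x * v y / 2 * ((u x / v x - u y / v y) / (x - y)) := by
    have h := A.two_mul_sub_mul_inner_translate x y
    have := sub_ne_zero.2 hxy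
    field_simp
    linarith
  have hlim := (tendsto_const_nhds (x := A.translate x)).inner (𝕜 := ℝ) (A.tendsto_negZeroProj Z hy)
  simp only [A.inner_translate_negZeroProj Z _ hx hy, hinner] at hlim
  refine (hasSum_iff_tendsto_nat_of_nonneg (fun k => ?_) _).2 ?_
  · have := Z.pos k
    positivity
  · have hne : v x * v y / 2 ≠ 0 := div_ne_zero (mul_ne_zero hvx hvy) two_ne_zero
    simpa only [inv_mul_cancel_left₀ hne] using hlim.const_mul (v x * v y / 2)⁻¹

theorem integral_exp_mul_tsum_negZero (A : IsDecayingAiryPair u v)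
    (Z : IsNegZeroEnumeration v δ) {l : ℝ} (hl : 0 < l) :
    ∫ x in Ioi (0 : ℝ), exp (-l * x) * ∑' k, (δ k ^ 2)⁻¹ * exp (-(δ k) * x) =
      2 * ((u l / v l - u 0 / v 0) / l) := by
  have hsum : HasSum (fun k => (δ k ^ 2)⁻¹ / (l + δ k)) (2 * ((u l / v l - u 0 / v 0) / l)) := by
    have h := (A.hasSum_partialFraction Z hl.le le_rfl hl.ne').mul_left 2
    rw [sub_zero] at h
    refine h.congr_fun fun k => ?_
    have := Z.pos k
    field_simp
    simp
  rw [integral_exp_mul_tsum_exp (fun k => add_pos hl (Z.pos k)) hsum.summable, hsum.tsum_eq]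

end IsDecayingAiryPair

/-- the Laplace transform of
`w(x) = (-u'(0)/2)·∑ₖ δₖ⁻²·e^{-δₖ x}` is `λ ↦ (u'(λ) - u'(0)·u(λ))/(λ·u'(λ))`.
Here `δ k` stands for `δ'_{k+1}`, the zeros of `h ↦ u'(-h)` on `(0,∞)`. -/
theorem stmt12
    (u : ℝ → ℝ) (hu_smooth : ContDiff ℝ 2 u)
    (hu_ode : ∀ h : ℝ, deriv (deriv u) h = 2 * h * u h)
    (hu_zero : u 0 = 1)
    (hu'_zero : deriv u 0 = -((6:ℝ) ^ ((1:ℝ)/3) * Real.Gamma (2/3) / Real.Gamma (1/3)))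
    (hu_pos : ∀ h : ℝ, 0 ≤ h → 0 < u h)
    (hu_anti : StrictAntiOn u (Ici 0))
    (hu_lim : Tendsto u atTop (𝓝 0))
    (δ : ℕ → ℝ) (hδ_pos : ∀ k, 0 < δ k) (hδ_mono : StrictMono δ)
    (hδ_zero : ∀ k, deriv u (-(δ k)) = 0)
    (hδ_all : ∀ x : ℝ, 0 < x → deriv u (-x) = 0 → ∃ k, δ k = x)
    (w : ℝ → ℝ)
    (hw : ∀ x : ℝ, 0 < x →
      w x = (-(deriv u 0) / 2) * ∑' k : ℕ, ((δ k) ^ 2)⁻¹ * Real.exp (-(δ k) * x)) :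
    ∀ l : ℝ, 0 < l →
      (∫ x in Ioi (0:ℝ), Real.exp (-l * x) * w x) =
        (deriv u l - deriv u 0 * u l) / (l * deriv u l) := by
  intro l hl
  have A : IsDecayingAiryPair u (deriv u) :=
    ⟨fun x => (hu_smooth.differentiable two_ne_zero x).hasDerivAt,
      fun x => hu_ode x ▸ (hu_smooth.differentiable_deriv_two x).hasDerivAt, hu_pos, hu_lim⟩
  have Z : IsNegZeroEnumeration (deriv u) δ :=
    ⟨hδ_pos, hδ_mono, hδ_zero, fun x hx hv =>
      (hδ_all (-x) (neg_pos.2 hx) (by rwa [neg_neg])).imp fun _ h => by rw [h, neg_neg]⟩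
  calc ∫ x in Ioi (0 : ℝ), exp (-l * x) * w x
      = -(deriv u 0) / 2 *
          ∫ x in Ioi (0 : ℝ), exp (-l * x) * ∑' k, (δ k ^ 2)⁻¹ * exp (-(δ k) * x) := by
        rw [← integral_const_mul]
        refine setIntegral_congr_fun measurableSet_Ioi fun x hx => ?_
        simp only [hw x hx, mul_left_comm (exp _)]
    _ = (deriv u l - deriv u 0 * u l) / (l * deriv u l) := by
        rw [A.integral_exp_mul_tsum_negZero Z hl, hu_zero]
        have := (A.snd_neg le_rfl).ne
        have := (A.snd_neg hl.le).ne
        field_simp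
        ring
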